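/- Suppose n ≡ 0 (mod 4). Then the fixed subring A^G is strictly larger than the ℂ-subalgebra of A generated by the orbit sums of degree n: A^G ≠ the ℂ-subalgebra generated by {O(n−i, i) : 0 ≤ i ≤ n/2}. (This is the lower bound β(g) ≥ 2n: invariants of degree n do not generate all invariants of degree 2n.) -/

import Mathlib

/-!
Setting: `lam n = exp(2πi/n)` is a primitive `n`-th root of unity in `ℂ`.
`SkewAlg` is the `(-1)`-skew polynomial ring `A = ℂ⟨u,v⟩/(uv+vu)`, with
generators `uGen`, `vGen`.  The automorphism `g` (of order `2n`) is determined
by `g u = v`, `g v = lam n • u`, and generates the cyclic group `G`, so that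
the fixed subring `A^G` is `{a | g a = a}`.  The orbit sum is
`orbitSum n a b = u^a v^b + (-1)^(a*b) * (lam n)^b • (u^b v^a)`.
-/

noncomputable section

/-- `lam n = exp(2πi/n)`, a primitive `n`-th root of unity. -/
def lam (n : ℕ) : ℂ := Complex.exp (2 * (Real.pi : ℂ) * Complex.I / (n : ℂ))

/-- The defining relation of the `(-1)`-skew polynomial ring: `uv + vu = 0`. -/
inductive SkewRel : FreeAlgebra ℂ (Fin 2) → FreeAlgebra ℂ (Fin 2) → Prop
  | rel : SkewRel (FreeAlgebra.ι ℂ 0 * FreeAlgebra.ι ℂ 1 + FreeAlgebra.ι ℂ 1 * FreeAlgebra.ι ℂ 0) 0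

/-- The skew polynomial ring `A = ℂ⟨u,v⟩/(uv+vu)`. -/
abbrev SkewAlg : Type := RingQuot SkewRel

/-- The generator `u` of `A`. -/
def uGen : SkewAlg := RingQuot.mkAlgHom ℂ SkewRel (FreeAlgebra.ι ℂ 0)

/-- The generator `v` of `A`. -/
def vGen : SkewAlg := RingQuot.mkAlgHom ℂ SkewRel (FreeAlgebra.ι ℂ 1)

/-- Orbit sum `O(a,b) = u^a v^b + (-1)^(ab) λ^b u^b v^a`. -/
def orbitSum (n a b : ℕ) : SkewAlg :=
  uGen ^ a * vGen ^ b + ((-1 : ℂ) ^ (a * b) * lam n ^ b) • (uGen ^ b * vGen ^ a)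

/-!
Sending `u, v` to `i, j` defines a homomorphism `ρ` from `A` to the quaternion algebra with
`i² = 1` and `j² = -λ`. Since `ρ` forgets even powers of `u` and turns `v²` into a scalar, it maps
`O(b + 2j, b)` to `(1 + (-λ)^(b + j)) i^b j^b`. When `4 ∣ n`, `(-λ)^(n/2) = -1`, so all orbit sums
of degree `n` die under `ρ`, and the algebra they generate has scalar image; but `(-λ)^n = 1`, so
the invariant `O(2n - 1, 1)` of degree `2n` is sent to the non-scalar `2ij`.
-/

open scoped Quaternion

lemma pow_mul_pow_of_mul_eq_smul {R A : Type*} [CommSemiring R] [Semiring A] [Algebra R A]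
    {q : R} {x y : A} (h : y * x = q • (x * y)) (a b : ℕ) :
    y ^ a * x ^ b = q ^ (a * b) • (x ^ b * y ^ a) := by
  have y_semiconj : SemiconjBy y x (q • x) := by rw [SemiconjBy, h, smul_mul_assoc]
  have pow_semiconj : SemiconjBy (x ^ b) (q ^ b • y) y := by
    rw [SemiconjBy, (y_semiconj.pow_right b).eq, smul_pow, smul_mul_assoc, mul_smul_comm]
  rw [← (pow_semiconj.pow_right a).eq, smul_pow, mul_smul_comm, ← pow_mul, mul_comm b a]

lemma lam_pow_self (n : ℕ) : lam n ^ n = 1 := by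
  rcases eq_or_ne n 0 with rfl | hn
  · exact pow_zero _
  · exact (Complex.isPrimitiveRoot_exp n hn).pow_eq_one

lemma lam_two_mul_pow_self {k : ℕ} (hk : k ≠ 0) : lam (2 * k) ^ k = -1 :=
  ((Complex.isPrimitiveRoot_exp (2 * k) (by omega)).pow (by omega)
    (mul_comm 2 k)).eq_neg_one_of_two_right

lemma neg_lam_four_mul_pow {m : ℕ} (hm : m ≠ 0) : (-lam (4 * m)) ^ (2 * m) = -1 := by
  rw [(even_two_mul m).neg_pow, show 4 * m = 2 * (2 * m) by omega]
  exact lam_two_mul_pow_self (by omega)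

lemma vGen_mul_uGen : vGen * uGen = (-1 : ℂ) • (uGen * vGen) := by
  have anticomm : uGen * vGen + vGen * uGen = 0 := by
    simpa only [map_add, map_mul, map_zero] using! RingQuot.mkAlgHom_rel ℂ SkewRel.rel
  exact (eq_neg_of_add_eq_zero_right anticomm).trans (neg_one_smul ℂ _).symm

lemma vGen_pow_mul_uGen_pow (a b : ℕ) :
    vGen ^ a * uGen ^ b = (-1 : ℂ) ^ (a * b) • (uGen ^ b * vGen ^ a) :=
  pow_mul_pow_of_mul_eq_smul vGen_mul_uGen a b

lemma map_orbitSum {n a b : ℕ} (hab : n ∣ a + b) (g : SkewAlg →ₐ[ℂ] SkewAlg)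
    (hgu : g uGen = vGen) (hgv : g vGen = lam n • uGen) :
    g (orbitSum n a b) = orbitSum n a b := by
  have lam_pow_add : lam n ^ b * lam n ^ a = 1 := by
    obtain ⟨c, hc⟩ := hab
    rw [← pow_add, add_comm, hc, pow_mul, lam_pow_self, one_pow]
  have sign_sq : (-1 : ℂ) ^ (a * b) * (-1) ^ (a * b) = 1 := by
    rw [← mul_pow, neg_one_mul, neg_neg, one_pow]
  have coeff : (-1) ^ (a * b) * lam n ^ b * lam n ^ a * (-1) ^ (a * b) = 1 := by
    linear_combination (-1) ^ (a * b) * (-1) ^ (a * b) * lam_pow_add + sign_sq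
  have map_left : g (uGen ^ a * vGen ^ b) =
      ((-1 : ℂ) ^ (a * b) * lam n ^ b) • (uGen ^ b * vGen ^ a) := by
    rw [map_mul, map_pow, map_pow, hgu, hgv, smul_pow, mul_smul_comm, vGen_pow_mul_uGen_pow,
      smul_smul, mul_comm]
  have map_right : g (((-1 : ℂ) ^ (a * b) * lam n ^ b) • (uGen ^ b * vGen ^ a)) =
      uGen ^ a * vGen ^ b := by
    rw [map_smul, map_mul, map_pow, map_pow, hgu, hgv, smul_pow, mul_smul_comm,
      vGen_pow_mul_uGen_pow, smul_smul, smul_smul, mul_comm b a, coeff, one_smul]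
  rw [orbitSum, map_add, map_left, map_right, add_comm]

section SkewLift

variable {B : Type*} [Ring B] [Algebra ℂ B] {x y : B}

/-- The universal property of `A = ℂ⟨u,v⟩/(uv+vu)`: the homomorphism sending `u` and `v` to a given
pair of anticommuting elements. -/
def skewLift (x y : B) (h : x * y + y * x = 0) : SkewAlg →ₐ[ℂ] B :=
  RingQuot.liftAlgHom ℂ ⟨FreeAlgebra.lift ℂ ![x, y], by
    rintro _ _ ⟨⟩
    simpa using h⟩

lemma skewLift_uGen (h : x * y + y * x = 0) : skewLift x y h uGen = x := by
  simp [skewLift, uGen]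

lemma skewLift_vGen (h : x * y + y * x = 0) : skewLift x y h vGen = y := by
  simp [skewLift, vGen]

end SkewLift

section QuaternionRep

variable (l : ℂ)

/-- The representation `ρ : u ↦ i, v ↦ j` of `A` on the quaternion algebra with `i² = 1` and
`j² = -l`; it is used with `l = lam n`. -/
def quaternionRep : SkewAlg →ₐ[ℂ] ℍ[ℂ,1,-l] :=
  skewLift ⟨0, 1, 0, 0⟩ ⟨0, 0, 1, 0⟩ (by ext <;> simp)

lemma quaternionRep_uGen : quaternionRep l uGen = ⟨0, 1, 0, 0⟩ :=
  skewLift_uGen _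

lemma quaternionRep_vGen : quaternionRep l vGen = ⟨0, 0, 1, 0⟩ :=
  skewLift_vGen _

lemma quaternionRep_uGen_sq : quaternionRep l uGen ^ 2 = 1 := by
  rw [quaternionRep_uGen, sq]
  ext <;> simp

lemma quaternionRep_vGen_sq : quaternionRep l vGen ^ 2 = (-l) • 1 := by
  rw [quaternionRep_vGen, sq]
  ext <;> simp

lemma quaternionRep_uGen_pow_add_two_mul (b j : ℕ) :
    quaternionRep l uGen ^ (b + 2 * j) = quaternionRep l uGen ^ b := by
  rw [pow_add, pow_mul, quaternionRep_uGen_sq, one_pow, mul_one]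

lemma quaternionRep_vGen_pow_add_two_mul (b j : ℕ) :
    quaternionRep l vGen ^ (b + 2 * j) = (-l) ^ j • quaternionRep l vGen ^ b := by
  rw [pow_add, pow_mul, quaternionRep_vGen_sq, smul_pow, one_pow, mul_smul_comm, mul_one]

lemma quaternionRep_orbitSum (n b j : ℕ) :
    quaternionRep (lam n) (orbitSum n (b + 2 * j) b) =
      (1 + (-lam n) ^ (b + j)) • quaternionRep (lam n) (uGen ^ b * vGen ^ b) := by
  have sign : (-1 : ℂ) ^ ((b + 2 * j) * b) = (-1) ^ b :=
    neg_one_pow_congr (by simp [parity_simps])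
  have coeff : (-1) ^ b * lam n ^ b * (-lam n) ^ j = (-lam n) ^ (b + j) := by
    rw [← mul_pow, neg_one_mul, ← pow_add]
  simp only [orbitSum, map_add, map_smul, map_mul, map_pow, quaternionRep_uGen_pow_add_two_mul,
    quaternionRep_vGen_pow_add_two_mul, mul_smul_comm, smul_smul, sign, coeff, add_smul, one_smul]

lemma quaternionRep_orbitSum_eq_zero {n k i : ℕ} (hk : (-lam n) ^ k = -1) (hi : i ≤ k) :
    quaternionRep (lam n) (orbitSum n (2 * k - i) i) = 0 := by
  rw [show 2 * k - i = i + 2 * (k - i) by omega, quaternionRep_orbitSum, Nat.add_sub_cancel' hi,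
    hk, add_neg_cancel, zero_smul]

lemma smul_quaternionRep_uGen_mul_vGen_notMem_bot {c : ℂ} (hc : c ≠ 0) :
    c • quaternionRep l (uGen * vGen) ∉ (⊥ : Subalgebra ℂ ℍ[ℂ,1,-l]) := by
  rintro ⟨r, hr⟩
  have imK_eq : 0 = c := by
    simpa [quaternionRep_uGen, quaternionRep_vGen, QuaternionAlgebra.algebraMap_eq] using
      congrArg QuaternionAlgebra.imK hr
  exact hc imK_eq.symm

lemma quaternionRep_orbitSum_one_notMem_bot {n j : ℕ} (hj : (-lam n) ^ (1 + j) = 1) :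
    quaternionRep (lam n) (orbitSum n (1 + 2 * j) 1) ∉ (⊥ : Subalgebra ℂ ℍ[ℂ,1,-lam n]) := by
  rw [quaternionRep_orbitSum, hj, pow_one, pow_one]
  exact smul_quaternionRep_uGen_mul_vGen_notMem_bot _ (by norm_num)

end QuaternionRep

/-- If `n ≡ 0 (mod 4)` (and `n > 0`) then the fixed subring `A^G` is strictly
larger than the `ℂ`-subalgebra generated by the orbit sums of degree `n`. -/
theorem fixed_ne_adjoin_of_mod_four_eq_zero (n : ℕ) (hn : 0 < n) (h4 : n % 4 = 0)
    (g : SkewAlg ≃ₐ[ℂ] SkewAlg) (hgu : g uGen = vGen) (hgv : g vGen = lam n • uGen) :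
    {a : SkewAlg | g a = a} ≠
      ↑(Algebra.adjoin ℂ {x : SkewAlg | ∃ i : ℕ, i ≤ n / 2 ∧ x = orbitSum n (n - i) i}) := by
  intro fixed_eq_adjoin
  obtain ⟨m, rfl⟩ : 4 ∣ n := Nat.dvd_of_mod_eq_zero h4
  have neg_lam_pow : (-lam (4 * m)) ^ (2 * m) = -1 := neg_lam_four_mul_pow (by omega)
  have adjoin_le : Algebra.adjoin ℂ {x | ∃ i, i ≤ 4 * m / 2 ∧ x = orbitSum (4 * m) (4 * m - i) i} ≤
      (⊥ : Subalgebra ℂ ℍ[ℂ,1,-lam (4 * m)]).comap (quaternionRep (lam (4 * m))) := by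
    refine Algebra.adjoin_le ?_
    rintro _ ⟨i, hi, rfl⟩
    rw [SetLike.mem_coe, Subalgebra.mem_comap, show 4 * m - i = 2 * (2 * m) - i by omega,
      quaternionRep_orbitSum_eq_zero neg_lam_pow (by omega)]
    exact zero_mem _
  have fixed : g (orbitSum (4 * m) (1 + 2 * (4 * m - 1)) 1) = orbitSum _ _ 1 :=
    map_orbitSum ⟨2, by omega⟩ g.toAlgHom hgu hgv
  have not_scalar := quaternionRep_orbitSum_one_notMem_bot (n := 4 * m) (j := 4 * m - 1) (by
    rw [show 1 + (4 * m - 1) = 2 * m * 2 by omega, pow_mul, neg_lam_pow, neg_one_sq])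
  exact not_scalar (adjoin_le (fixed_eq_adjoin.subset fixed))
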